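/- Let α ≥ 2 be real, let n ≥ 2 be a natural number, and let x satisfy −1 < x < −(α+1)/(α+3). Then P̃_n^{(α,0)}(x) > P̃₁^{(α,0)}(x). -/

import Mathlib

open Finset

/-- The generalized binomial coefficient `binom(a, k) = a(a-1)⋯(a-k+1)/k!` for real `a`. -/
noncomputable def genBinom (a : ℝ) (k : ℕ) : ℝ :=
  (∏ i ∈ Finset.range k, (a - i)) / (Nat.factorial k)

/-- The Jacobi polynomial
`P_n^{(α,β)}(x) = Σ_{s=0}^n binom(n+α, n-s)·binom(n+β, s)·((x-1)/2)^s·((x+1)/2)^{n-s}`. -/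
noncomputable def jacobiP (n : ℕ) (α β x : ℝ) : ℝ :=
  ∑ s ∈ Finset.range (n + 1),
    genBinom (n + α) (n - s) * genBinom (n + β) s * ((x - 1) / 2) ^ s * ((x + 1) / 2) ^ (n - s)

/-- The normalized Jacobi polynomial `P̃_n^{(α,β)}(x) = P_n^{(α,β)}(x) / P_n^{(α,β)}(1)`. -/
noncomputable def jacobiPt (n : ℕ) (α β x : ℝ) : ℝ :=
  jacobiP n α β x / jacobiP n α β 1

lemma genBinom_succ_mul (a : ℝ) (k : ℕ) :
    genBinom a (k + 1) * (k + 1) = genBinom a k * (a - k) := by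
  unfold genBinom
  rw [Finset.prod_range_succ, Nat.factorial_succ]
  have h1 : (Nat.factorial k : ℝ) ≠ 0 := by positivity
  have h2 : (k : ℝ) + 1 ≠ 0 := by positivity
  push_cast
  field_simp

lemma genBinom_diag_succ (α : ℝ) (n : ℕ) :
    genBinom ((n + 1 : ℕ) + α) (n + 1) * (n + 1) = genBinom (n + α) n * (n + 1 + α) := by
  unfold genBinom
  rw [Finset.prod_range_succ', Nat.factorial_succ]
  have h1 : (Nat.factorial n : ℝ) ≠ 0 := by positivity
  have h2 : (n : ℝ) + 1 ≠ 0 := by positivity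
  have h3 : ∀ i ∈ Finset.range n,
      (((n + 1 : ℕ) : ℝ) + α - ((i + 1 : ℕ) : ℝ)) = (n + α - i) := by
    intro i _
    push_cast
    ring
  rw [Finset.prod_congr rfl h3]
  push_cast
  field_simp
  ring

lemma genBinom_self (n : ℕ) : genBinom (n + 0) n = 1 := by
  induction n with
  | zero => simp [genBinom]
  | succ k ih =>
    have h := genBinom_diag_succ 0 k
    rw [ih] at h
    have h2 : (k : ℝ) + 1 ≠ 0 := by positivity
    apply mul_right_cancel₀ h2
    rw [h]
    ring

lemma jacobiP_one (n : ℕ) (α : ℝ) : jacobiP n α 0 1 = genBinom (n + α) n := by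
  unfold jacobiP
  rw [Finset.sum_eq_single 0]
  · simp [genBinom]
  · intro s _ hs
    simp [hs]
  · simp

lemma genBinom_diag_ge (α : ℝ) (hα : 2 ≤ α) (n : ℕ) (hn : 5 ≤ n) :
    (α + 1) * (α + 2) * (α + 3) * (α + 4) * (α + 5) / 120 ≤ genBinom (n + α) n := by
  induction n, hn using Nat.le_induction with
  | base =>
    apply le_of_eq
    simp [genBinom, Finset.prod_range_succ, Nat.factorial]
    ring
  | succ n hn ih =>
    have h := genBinom_diag_succ α n
    have h0 : 0 ≤ genBinom (n + α) n := le_trans (by positivity) ih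
    have h2 : (0 : ℝ) < (n : ℝ) + 1 := by positivity
    refine le_trans ih ?_
    by_contra hc
    push Not at hc
    nlinarith

open Polynomial in
noncomputable def jacU (s m : ℕ) : ℝ[X] := (X - 1) ^ s * X ^ m

open Polynomial in
lemma jacU_der (s m : ℕ) :
    X * (X - 1) * derivative (jacU s m) = ((s : ℝ[X]) * X + (m : ℝ[X]) * (X - 1)) * jacU s m := by
  unfold jacU
  have h1 : (X - 1) * derivative ((X - 1 : ℝ[X]) ^ s) = (s : ℝ[X]) * (X - 1) ^ s := by
    rcases s with _ | s
    · simp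
    · rw [derivative_pow]
      simp
      ring
  have h2 : X * derivative ((X : ℝ[X]) ^ m) = (m : ℝ[X]) * X ^ m := by
    rcases m with _ | m
    · simp
    · rw [derivative_X_pow]
      simp
      ring
  rw [derivative_mul]
  linear_combination X ^ m * X * h1 + (X - 1) ^ s * (X - 1) * h2

open Polynomial in
lemma jacU_der2 (s m : ℕ) :
    (2 * X - 1) * derivative (jacU s m) + X * (X - 1) * derivative (derivative (jacU s m)) =
      ((s : ℝ[X]) + (m : ℝ[X])) * jacU s m
        + ((s : ℝ[X]) * X + (m : ℝ[X]) * (X - 1)) * derivative (jacU s m) := by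
  have h := congrArg derivative (jacU_der s m)
  simp only [derivative_mul, derivative_add, derivative_sub, derivative_X, derivative_one,
    derivative_natCast] at h
  linear_combination h

open Polynomial in
lemma jacU_L (s m : ℕ) (α t : ℝ) (h0 : t ≠ 0) (h1 : t - 1 ≠ 0) :
    t * (1 - t) * (derivative (derivative (jacU s m))).eval t
      + (1 - (α + 2) * t) * (derivative (jacU s m)).eval t
      + ((s : ℝ) + m) * (s + m + α + 1) * (jacU s m).eval t
    = (m : ℝ) ^ 2 * ((jacU s m).eval t / t) - s * (s + α) * ((jacU s m).eval t / (t - 1)) := by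
  have e1 := congrArg (Polynomial.eval t) (jacU_der s m)
  have e2 := congrArg (Polynomial.eval t) (jacU_der2 s m)
  simp at e1 e2
  generalize (derivative (derivative (jacU s m))).eval t = u2 at *
  generalize (derivative (jacU s m)).eval t = u1 at *
  generalize (jacU s m).eval t = u at *
  have h : u1 = (s * t + m * (t - 1)) * u / (t * (t - 1)) := by
    field_simp
    linear_combination e1
  have h2 : t * (1 - t) * u2 = (2 * t - 1) * u1 - (s + m) * u - (s * t + m * (t - 1)) * u1 := by
    linear_combination -e2
  rw [h2, h]
  field_simp
  ring

noncomputable def jacE (n : ℕ) (α : ℝ) (s : ℕ) : ℝ :=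
  genBinom (n + α) (n - s) * genBinom (n + 0) s

open Polynomial in
noncomputable def jacPoly (n : ℕ) (α : ℝ) : ℝ[X] :=
  ∑ s ∈ Finset.range (n + 1), C (jacE n α s) * jacU s (n - s)

lemma jacE_rec (n : ℕ) (α : ℝ) (s : ℕ) (hs : s < n) :
    jacE n α (s + 1) * ((s + 1) * (s + 1 + α)) = jacE n α s * ((n : ℝ) - s) ^ 2 := by
  obtain ⟨k, rfl⟩ : ∃ k, n = s + k + 1 := ⟨n - s - 1, by omega⟩
  unfold jacE
  have a1 : s + k + 1 - (s + 1) = k := by omega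
  have a2 : s + k + 1 - s = k + 1 := by omega
  rw [a1, a2]
  have b1 := genBinom_succ_mul (((s + k + 1 : ℕ) : ℝ) + α) k
  have b2 := genBinom_succ_mul (((s + k + 1 : ℕ) : ℝ) + 0) s
  generalize genBinom (((s + k + 1 : ℕ) : ℝ) + α) (k + 1) = A1 at *
  generalize genBinom (((s + k + 1 : ℕ) : ℝ) + α) k = A0 at *
  generalize genBinom (((s + k + 1 : ℕ) : ℝ) + 0) (s + 1) = B1 at *
  generalize genBinom (((s + k + 1 : ℕ) : ℝ) + 0) s = B0 at *
  push_cast at *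
  linear_combination (A0 * (s + 1 + α)) * b2 - (B0 * (k + 1)) * b1

lemma jacPoly_eval (n : ℕ) (α x : ℝ) :
    jacobiP n α 0 x = (jacPoly n α).eval ((x + 1) / 2) := by
  unfold jacobiP jacPoly jacE jacU
  rw [Polynomial.eval_finsetSum]
  apply Finset.sum_congr rfl
  intro s _
  simp only [Polynomial.eval_mul, Polynomial.eval_C, Polynomial.eval_pow, Polynomial.eval_sub,
    Polynomial.eval_X, Polynomial.eval_one]
  have : (x + 1) / 2 - 1 = (x - 1) / 2 := by ring
  rw [this]
  ring

open Polynomial in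
lemma jacPoly_ode (n : ℕ) (α t : ℝ) (h0 : t ≠ 0) (h1 : t - 1 ≠ 0) :
    t * (1 - t) * (derivative (derivative (jacPoly n α))).eval t
      + (1 - (α + 2) * t) * (derivative (jacPoly n α)).eval t
      + (n : ℝ) * (n + α + 1) * (jacPoly n α).eval t = 0 := by
  unfold jacPoly
  simp only [derivative_sum, eval_finsetSum, Finset.mul_sum, derivative_C_mul, eval_C_mul]
  rw [← Finset.sum_add_distrib, ← Finset.sum_add_distrib]
  have key : ∀ s ∈ Finset.range (n + 1),
      t * (1 - t) * (jacE n α s * (derivative (derivative (jacU s (n - s)))).eval t)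
        + (1 - (α + 2) * t) * (jacE n α s * (derivative (jacU s (n - s))).eval t)
        + (n : ℝ) * (n + α + 1) * (jacE n α s * (jacU s (n - s)).eval t)
      = jacE n α s * ((n : ℝ) - s) ^ 2 * ((jacU s (n - s)).eval t / t)
        - jacE n α s * (s * (s + α)) * ((jacU s (n - s)).eval t / (t - 1)) := by
    intro s hs
    have hs' : s ≤ n := by
      have := Finset.mem_range.1 hs
      omega
    have h := jacU_L s (n - s) α t h0 h1
    have hc : ((n - s : ℕ) : ℝ) = (n : ℝ) - s := by
      push_cast [hs']
      ring
    rw [hc] at h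
    linear_combination (jacE n α s) * h
  rw [Finset.sum_congr rfl key, Finset.sum_sub_distrib, Finset.sum_range_succ,
    Finset.sum_range_succ' (fun s : ℕ =>
      jacE n α s * (s * (s + α)) * ((jacU s (n - s)).eval t / (t - 1)))]
  have : ∀ s ∈ Finset.range n,
      jacE n α s * ((n : ℝ) - s) ^ 2 * ((jacU s (n - s)).eval t / t)
      = jacE n α (s + 1) * (((s + 1 : ℕ) : ℝ) * (((s + 1 : ℕ) : ℝ) + α)) *
        ((jacU (s + 1) (n - (s + 1))).eval t / (t - 1)) := by
    intro s hs
    have hs' := Finset.mem_range.1 hs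
    have hr := jacE_rec n α s hs'
    push_cast
    rw [hr]
    congr 1
    obtain ⟨k, rfl⟩ : ∃ k, n = s + k + 1 := ⟨n - s - 1, by omega⟩
    have a1 : s + k + 1 - (s + 1) = k := by omega
    have a2 : s + k + 1 - s = k + 1 := by omega
    rw [a1, a2]
    simp [jacU]
    field_simp
    ring
  rw [Finset.sum_congr rfl this]
  simp

lemma jacPoly_zero (n : ℕ) (α : ℝ) : ((jacPoly n α).eval 0) ^ 2 = 1 := by
  unfold jacPoly jacU jacE
  rw [Polynomial.eval_finsetSum, Finset.sum_eq_single n]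
  · rw [genBinom_self]
    simp [genBinom, ← pow_mul]
  · intro s hs hne
    have hs' := Finset.mem_range.1 hs
    have : n - s ≠ 0 := by omega
    simp [this]
  · simp

open Polynomial in
lemma jacPoly_bound (n : ℕ) (hn : 1 ≤ n) (α : ℝ) (hα : 2 ≤ α) (t : ℝ) (ht0 : 0 ≤ t)
    (ht1 : t ≤ 1 / (α + 3)) :
    ((jacPoly n α).eval t) ^ 2 * (α + 2) ≤ 2 * α + 1 := by
  set F := jacPoly n α with hF
  set μ : ℝ := (α - 1) * (α + 3) / (2 * α + 1) with hμ
  set l : ℝ := (n : ℝ) * (n + α + 1) with hl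
  have hn' : (1 : ℝ) ≤ n := by exact_mod_cast hn
  have hlpos : 0 < l := by positivity
  have hμ0 : 0 ≤ μ := by
    apply div_nonneg
    · nlinarith
    · linarith
  have hμ1 : μ * (2 * α + 1) = (α - 1) * (α + 3) := by
    rw [hμ]
    field_simp
  set E : ℝ[X] := (1 - C μ * X) * (F ^ 2 + C l⁻¹ * (X * (1 - X) * (derivative F) ^ 2)) with hE
  have anti : AntitoneOn (fun u => E.eval u) (Set.Icc 0 (1 / (α + 3))) := by
    apply antitoneOn_of_deriv_nonpos (convex_Icc _ _) E.continuous.continuousOn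
      E.differentiable.differentiableOn
    intro u hu
    rw [interior_Icc] at hu
    obtain ⟨hu0, hu1⟩ := hu
    have hu1' : u * (α + 3) < 1 := by
      rwa [lt_div_iff₀ (by linarith)] at hu1
    have hult : u < 1 := by nlinarith
    have ode := jacPoly_ode n α u hu0.ne' (by linarith)
    rw [Polynomial.deriv, hE]
    simp only [derivative_mul, derivative_add, derivative_sub, derivative_X, derivative_one,
      derivative_C, derivative_pow, eval_add, eval_mul, eval_sub, eval_X, eval_one, eval_C,
      eval_pow, eval_zero]
    rw [← hF] at ode
    generalize (derivative (derivative F)).eval u = f2 at *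
    generalize (derivative F).eval u = f1 at *
    generalize F.eval u = f at *
    have hid : -(μ * (f ^ 2 + l⁻¹ * (u * (1 - u) * f1 ^ 2))) +
        (1 - μ * u) * (2 * f * f1 + l⁻¹ * ((1 - u + -u) * f1 ^ 2 + u * (1 - u) * (2 * f1 * f2)))
        = -(μ * f ^ 2) - l⁻¹ * f1 ^ 2 * ((1 - (α - 1) * u) * (1 - (α + 3) * u)) := by
      have hf2 : u * (1 - u) * f2 = -(1 - (α + 2) * u) * f1 - l * f := by
        linear_combination ode
      have hll : l⁻¹ * l = 1 := inv_mul_cancel₀ hlpos.ne'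
      linear_combination (1 - μ * u) * l⁻¹ * 2 * f1 * hf2 - (1 - μ * u) * 2 * f * f1 * hll
        - l⁻¹ * f1 ^ 2 * u ^ 2 * hμ1
    have hneg : -(μ * f ^ 2) - l⁻¹ * f1 ^ 2 * ((1 - (α - 1) * u) * (1 - (α + 3) * u)) ≤ 0 := by
      have p1 : 0 ≤ 1 - (α - 1) * u := by nlinarith
      have p2 : 0 ≤ 1 - (α + 3) * u := by nlinarith
      have p3 : 0 ≤ l⁻¹ * f1 ^ 2 * ((1 - (α - 1) * u) * (1 - (α + 3) * u)) := by positivity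
      have p4 : 0 ≤ μ * f ^ 2 := by positivity
      linarith
    refine le_trans (le_of_eq ?_) hneg
    rw [← hid]
    ring
  have hE0 : E.eval 0 = 1 := by
    have := jacPoly_zero n α
    rw [← hF] at this
    simp [hE, this]
  have hle : E.eval t ≤ E.eval 0 := anti ⟨le_refl _, by positivity⟩ ⟨ht0, ht1⟩ ht0
  rw [hE0] at hle
  have ht1' : t * (α + 3) ≤ 1 := by
    rwa [le_div_iff₀ (by linarith)] at ht1
  simp only [hE, eval_mul, eval_add, eval_sub, eval_X, eval_one, eval_C, eval_pow] at hle
  generalize (derivative F).eval t = f1 at *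
  generalize F.eval t = f at *
  have htlt : 0 ≤ 1 - t := by nlinarith
  have hphi : α + 2 ≤ (1 - μ * t) * (2 * α + 1) := by
    have : (1 - μ * t) * (2 * α + 1) = 2 * α + 1 - (α - 1) * ((α + 3) * t) := by
      linear_combination -t * hμ1
    rw [this]
    nlinarith
  have hphi0 : 0 ≤ 1 - μ * t := by
    by_contra hc
    push Not at hc
    nlinarith
  have hq : 0 ≤ l⁻¹ * (t * (1 - t) * f1 ^ 2) := by positivity
  have h3 : (1 - μ * t) * f ^ 2 ≤ 1 := by nlinarith [mul_nonneg hphi0 hq]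
  nlinarith [sq_nonneg f, mul_le_mul_of_nonneg_left hphi (sq_nonneg f)]

set_option maxHeartbeats 2000000 in
/-- For `α ≥ 2`, `n ≥ 2` and `-1 < x < -(α+1)/(α+3)`, the normalized Jacobi
polynomials with `β = 0` satisfy `P̃_n^{(α,0)}(x) > P̃₁^{(α,0)}(x)`. -/
theorem jacobiPt_gt_beta_zero (α : ℝ) (hα : 2 ≤ α) (n : ℕ) (hn : 2 ≤ n) (x : ℝ)
    (hx0 : -1 < x) (hx1 : x < -(α + 1) / (α + 3)) :
    jacobiPt n α 0 x > jacobiPt 1 α 0 x := by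
  obtain ⟨t, rfl⟩ : ∃ t, x = 2 * t - 1 := ⟨(x + 1) / 2, by ring⟩
  have ht0 : 0 < t := by linarith
  have ht1 : t * (α + 3) < 1 := by
    rw [lt_div_iff₀ (by linarith)] at hx1
    nlinarith
  have hP1 : jacobiPt 1 α 0 (2 * t - 1) = ((α + 2) * t - 1) / (α + 1) := by
    unfold jacobiPt
    rw [jacobiP_one]
    simp [jacobiP, genBinom, Finset.sum_range_succ]
    rw [add_comm 1 α]
    congr 1
    ring
  rw [hP1]
  unfold jacobiPt
  rw [jacobiP_one, gt_iff_lt]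
  -- the common reduction
  have red : ∀ B y : ℝ, 0 < B → -(B * (1 - (α + 2) * t)) < y * (α + 1) →
      ((α + 2) * t - 1) / (α + 1) < y / B := by
    intro B y hB h
    rw [div_lt_div_iff₀ (by linarith) hB]
    linarith
  have hT : 1 < (1 - (α + 2) * t) * (α + 3) := by nlinarith
  have hT0 : 0 < 1 - (α + 2) * t := by nlinarith
  by_cases h5 : 5 ≤ n
  · have hB := genBinom_diag_ge α hα n h5
    have hb := jacPoly_bound n (by omega) α hα t ht0.le (by
      rw [le_div_iff₀ (by linarith)]
      exact ht1.le)
    have hev := jacPoly_eval n α (2 * t - 1)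
    have : (2 * t - 1 + 1) / 2 = t := by ring
    rw [this] at hev
    rw [← hev] at hb
    generalize jacobiP n α 0 (2 * t - 1) = y at *
    generalize genBinom (n + α) n = B at *
    have hB0 : 0 < B := lt_of_lt_of_le (by positivity) hB
    apply red B y hB0
    set r : ℝ := (α + 2) * (α + 4) * (α + 5) / 120 with hr
    have hr1 : 7 / 20 * (α + 2) ≤ r := by
      rw [hr]
      nlinarith [mul_nonneg (show 0 ≤ α + 2 by linarith) (show 0 ≤ (α - 2) * (α + 11) by nlinarith)]
    have hy : -r < y := by
      by_contra hc
      push Not at hc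
      have h1 : 7 / 20 * (α + 2) ≤ -y := by linarith
      have h2 : (7 / 20 * (α + 2)) ^ 2 ≤ y ^ 2 := by nlinarith
      have h3 : (7 / 20 * (α + 2)) ^ 2 * (α + 2) ≤ y ^ 2 * (α + 2) :=
        mul_le_mul_of_nonneg_right h2 (by linarith)
      have h4 : (α + 2) ^ 2 * 4 ≤ (α + 2) ^ 2 * (α + 2) :=
        mul_le_mul_of_nonneg_left (by linarith) (by positivity)
      nlinarith
    have hB2 : r * (α + 1) ≤ B * (1 - (α + 2) * t) := by
      have e1 : r * (α + 1) * (α + 3) ≤ B := by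
        refine le_trans (le_of_eq ?_) hB
        rw [hr]
        ring
      have e2 : r * (α + 1) * (α + 3) * (1 - (α + 2) * t) ≤ B * (1 - (α + 2) * t) :=
        mul_le_mul_of_nonneg_right e1 hT0.le
      have e3 : 0 ≤ r * (α + 1) := by positivity
      nlinarith
    nlinarith
  · have hcases : n = 2 ∨ n = 3 ∨ n = 4 := by omega
    rcases hcases with rfl | rfl | rfl
    · apply red
      · norm_num [genBinom, Finset.prod_range_succ, Nat.factorial]
        ring_nf
        positivity
      · have hy : jacobiP 2 α 0 (2 * t - 1) =
            1 - 2 * (α + 3) * t + (α + 3) * (α + 4) / 2 * t ^ 2 := by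
          norm_num [jacobiP, genBinom, Finset.prod_range_succ, Finset.sum_range_succ,
            Nat.factorial]
          ring
        have hB : genBinom ((2 : ℕ) + α) 2 = (α + 1) * (α + 2) / 2 := by
          norm_num [genBinom, Finset.prod_range_succ, Nat.factorial]
          ring
        rw [hy, hB]
        have p1 : 0 < 1 - t * (α + 3) := by linarith
        have p2 : 0 < 1 - t := by nlinarith
        have e1 : 0 < (α + 1) * ((α + 4) / 2 * ((1 - t * (α + 3)) * (1 - t))) := by positivity
        linarith
    · have hB : genBinom ((3 : ℕ) + α) 3 = (α + 1) * (α + 2) * (α + 3) / 6 := by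
        norm_num [genBinom, Finset.prod_range_succ, Nat.factorial]
        ring
      rw [hB]
      apply red
      · positivity
      · have hy : jacobiP 3 α 0 (2 * t - 1) = -(1 - 3 * (α + 4) * t
            + 3 / 2 * ((α + 4) * (α + 5)) * t ^ 2
            - (α + 4) * (α + 5) * (α + 6) / 6 * t ^ 3) := by
          norm_num [jacobiP, genBinom, Finset.prod_range_succ, Finset.sum_range_succ,
            Nat.factorial]
          ring
        rw [hy]
        have ht5 : t ≤ 1 / 5 := by nlinarith
        have a1 : 9 * (α + 4) * ((α + 5) * t) ≤ 9 * (α + 4) * (7 / 5) :=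
          mul_le_mul_of_nonneg_left (by linarith) (by linarith)
        have a2 : t * (9 * (α + 4) * ((α + 5) * t)) ≤ t * (18 * (α + 4) - 5 * (α + 3)) :=
          mul_le_mul_of_nonneg_left (by linarith) ht0.le
        have a3 : 0 < (α + 4) * (α + 5) * (α + 6) * t ^ 3 := by positivity
        have a4 : 20 ≤ (α + 2) * (α + 3) := by nlinarith
        have a5 : 6 - 5 * (t * (α + 3)) ≤ (α + 2) * (α + 3) * (1 - (α + 2) * t) := by
          have : (α + 2) * (α + 3) * (1 - (α + 2) * t)
            = (α + 2) * (α + 3) * (1 - t * (α + 3)) + (α + 2) * (t * (α + 3)) := by ring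
          rw [this]
          have b1 : 20 * (1 - t * (α + 3)) ≤ (α + 2) * (α + 3) * (1 - t * (α + 3)) :=
            mul_le_mul_of_nonneg_right a4 (by linarith)
          have b2 : 4 * (t * (α + 3)) ≤ (α + 2) * (t * (α + 3)) :=
            mul_le_mul_of_nonneg_right (by linarith) (by positivity)
          linarith
        have a6 : 0 < (α + 2) * (α + 3) * (1 - (α + 2) * t) - 6 * (1 - 3 * (α + 4) * t
            + 3 / 2 * ((α + 4) * (α + 5)) * t ^ 2
            - (α + 4) * (α + 5) * (α + 6) / 6 * t ^ 3) := by linarith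
        have a7 := mul_pos a6 (show 0 < α + 1 by linarith)
        linarith
    · have hB : genBinom ((4 : ℕ) + α) 4 = (α + 1) * (α + 2) * (α + 3) * (α + 4) / 24 := by
        norm_num [genBinom, Finset.prod_range_succ, Nat.factorial]
        ring
      rw [hB]
      apply red
      · positivity
      · have hy : jacobiP 4 α 0 (2 * t - 1) = 1 - 4 * ((α + 5) * t)
            + 3 * (((α + 5) * t) * ((α + 5) * t + t))
            - 2 / 3 * (((α + 5) * t) * ((α + 5) * t + t) * ((α + 5) * t + 2 * t))
            + (((α + 5) * t) * ((α + 5) * t + t) * ((α + 5) * t + 2 * t)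
              * ((α + 5) * t + 3 * t)) / 24 := by
          norm_num [jacobiP, genBinom, Finset.prod_range_succ, Finset.sum_range_succ,
            Nat.factorial]
          ring
        have ht5 : t ≤ 1 / 5 := by nlinarith
        have hz0 : 0 < (α + 5) * t := by positivity
        have hz1 : (α + 5) * t ≤ 1 + 2 * t := by linarith
        have hy1 : -1 < jacobiP 4 α 0 (2 * t - 1) := by
          rw [hy]
          generalize (α + 5) * t = z at *
          have q4 : 0 < (z * (z + t) * (z + 2 * t) * (z + 3 * t)) / 24 := by positivity
          have q3 : z * (z + t) * (z + 2 * t) ≤ z * (z + t) * (1 + 4 * t) :=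
            mul_le_mul_of_nonneg_left (by linarith) (by positivity)
          obtain ⟨c, hc⟩ : ∃ c, c = (7 - 8 * t) / 3 := ⟨_, rfl⟩
          have hcpos : 0 < c := by linarith
          have hdisc : 0 < 8 * c - (4 - c * t) ^ 2 := by
            have w1 : 0 ≤ c * t := by positivity
            have w2 : c * t ≤ 4 := by nlinarith
            have w3 : 9 / 5 * t ≤ c * t := mul_le_mul_of_nonneg_right (by linarith) ht0.le
            have w4 : (4 - c * t) ^ 2 ≤ (4 - 9 / 5 * t) ^ 2 := by
              apply pow_le_pow_left₀ <;> linarith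
            nlinarith
          have hG : 0 < 2 - 4 * z + c * (z * (z + t)) := by
            have : 0 < c * (2 - 4 * z + c * (z * (z + t))) := by
              nlinarith [sq_nonneg (c * z - (4 - c * t) / 2)]
            exact pos_of_mul_pos_right this hcpos.le
          rw [hc] at hG
          linarith
        have b1 : 24 ≤ (α + 2) * (α + 4) := by nlinarith
        have b2 : (α + 2) * (α + 4) * 1 ≤ (α + 2) * (α + 4) * ((1 - (α + 2) * t) * (α + 3)) :=
          mul_le_mul_of_nonneg_left hT.le (by positivity)
        have b3 : 0 < (jacobiP 4 α 0 (2 * t - 1) + (α + 2) * (α + 4) *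
          ((1 - (α + 2) * t) * (α + 3)) / 24) * (α + 1) := mul_pos (by linarith) (by linarith)
        linarith
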